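/- Let G be a finite non-cyclic group of order n with |Cyc(G)| = 1. Then the complement graph Γ̄_G is isomorphic to K₄ ∪ (n-5)K₁ — that is, there exist four distinct vertices a, b, c, d of Γ̄_G that are pairwise adjacent in Γ̄_G, every vertex other than a, b, c, d is isolated in Γ̄_G, and these are the only edges of Γ̄_G — if and only if n = 10 and G is isomorphic to the dihedral group of order 10. -/

import Mathlib

/-- The cyclicizer of a group `G`: the set of `y` such that `⟨x, y⟩` is cyclic
for every `x ∈ G`. -/
def cyclicizer (G : Type*) [Group G] : Set G :=
  {y | ∀ x : G, IsCyclic (Subgroup.closure ({x, y} : Set G))}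

/- Suppose `Γ̄_G` is the union of a complete graph on `S`, `|S| ≥ 2`, and isolated vertices. Some
vertex `t` is isolated, since otherwise every element of `S` would lie in the cyclicizer; if `k` is
in the cyclicizer, then `t * k` is a vertex and `⟨t, t * k⟩` is cyclic, so `t * k = t` and `k = 1`.
It follows that `C = S ∪ {1}` is a subgroup any two of whose elements generate a cyclic group, hence
`C` is cyclic. An element `v ∉ C` is isolated although `⟨v, v⁻¹⟩` is cyclic, so `v² = 1`. Therefore
each `v ∉ C` inverts `C` by conjugation, and the product of two such elements centralizes `C`; as
`C` has an element of order greater than two, that product lies in `C`. Thus `C` has index two and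
`G` is dihedral. Conversely, a cyclic subgroup containing a reflection of a dihedral group has order
two, so reflections are isolated vertices. -/

section SubgroupsWithInvolutiveComplement

variable {G : Type*} [Group G] {C : Subgroup G} {a c g t u x : G}

theorem eq_one_or_eq_of_mem_zpowers (hg : g ^ 2 = 1) (hx : x ∈ Subgroup.zpowers g) :
    x = 1 ∨ x = g := by
  obtain ⟨k, rfl⟩ := Subgroup.mem_zpowers_iff.1 hx
  have hg' : g ^ (2 : ℤ) = 1 := mod_cast hg
  obtain ⟨l, rfl | rfl⟩ := Int.even_or_odd' k <;> simp [zpow_add, zpow_mul, hg']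

theorem conj_eq_inv_of_notMem (hC : ∀ v ∉ C, v ^ 2 = 1) (ht : t ∉ C) (hc : c ∈ C) :
    t * c * t⁻¹ = c⁻¹ := by
  have htc : t * c * (t * c) = 1 := by
    rw [← sq, hC _ fun h => ht ((C.mul_mem_cancel_right hc).1 h)]
  have ht_inv : t⁻¹ = t := inv_eq_of_mul_eq_one_left (by rw [← sq, hC t ht])
  rw [ht_inv]
  exact eq_inv_of_mul_eq_one_left (by rw [mul_assoc, htc])

theorem mul_mem_of_notMem_of_notMem (hC : ∀ v ∉ C, v ^ 2 = 1) (ha : a ∈ C) (ha2 : a ^ 2 ≠ 1)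
    (ht : t ∉ C) (hu : u ∉ C) : t * u ∈ C := by
  by_contra htu
  have ha_inv : a⁻¹ = a := calc
    a⁻¹ = t * u * a * (t * u)⁻¹ := (conj_eq_inv_of_notMem hC htu ha).symm
    _ = t * (u * a * u⁻¹) * t⁻¹ := by group
    _ = t * a⁻¹ * t⁻¹ := by rw [conj_eq_inv_of_notMem hC hu ha]
    _ = a := by rw [conj_eq_inv_of_notMem hC ht (inv_mem ha), inv_inv]
  exact ha2 (by rw [sq, ← inv_eq_iff_mul_eq_one, ha_inv])

/-- `C` behaves like the rotation subgroup of a dihedral group: it is cyclic and proper, and every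
element outside it is an involution. This is the group-theoretic form of the condition on the
graph. -/
structure IsRotationSubgroup (C : Subgroup G) : Prop where
  isCyclic : IsCyclic C
  ne_top : C ≠ ⊤
  sq_eq_one : ∀ v ∉ C, v ^ 2 = 1

end SubgroupsWithInvolutiveComplement

section Dihedral

open DihedralGroup Multiplicative

variable {G : Type*} [Group G] {n : ℕ}

/-- The homomorphism from the dihedral group determined by the images `φ` of the rotations and `t`
of the reflection `sr 0`; it is used to recognize dihedral groups. -/
def dihedralLift (φ : Multiplicative (ZMod n) →* G) (t : G) (ht : t ^ 2 = 1)
    (hconj : ∀ i, t * φ i * t⁻¹ = (φ i)⁻¹) : DihedralGroup n →* G :=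
  MonoidHom.mk' (fun
      | r i => φ (ofAdd i)
      | sr i => t * φ (ofAdd i)) <| by
    have ht' : t * t = 1 := by rw [← sq, ht]
    have hcomm (i) : φ i * t = t * (φ i)⁻¹ := by
      rw [← hconj, ← mul_assoc, ← mul_assoc, ht', one_mul, inv_eq_of_mul_eq_one_left ht']
    rintro (i | i) (j | j)
    · simp only [r_mul_r, ofAdd_add, map_mul]
    · rw [r_mul_sr, ← mul_assoc, hcomm, mul_assoc, ← map_inv, ← map_mul, ← ofAdd_neg,
        ← ofAdd_add, neg_add_eq_sub]
    · simp only [sr_mul_r, ofAdd_add, map_mul, mul_assoc]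
    · rw [sr_mul_sr, ← mul_assoc, mul_assoc t, hcomm, ← mul_assoc, ht', one_mul, ← map_inv,
        ← map_mul, ← ofAdd_neg, ← ofAdd_add, neg_add_eq_sub]

theorem dihedralLift_bijective {C : Subgroup G} (φ : Multiplicative (ZMod n) ≃* C) {t : G}
    (htC : t ∉ C) (ht : t ^ 2 = 1) (hconj : ∀ i, t * (φ i : G) * t⁻¹ = (φ i : G)⁻¹)
    (hmul : ∀ g ∉ C, t * g ∈ C) :
    Function.Bijective (dihedralLift (C.subtype.comp φ.toMonoidHom) t ht hconj) := by
  constructor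
  · rw [injective_iff_map_eq_one]
    rintro (i | i) (h : _ = (1 : G))
    · have hi : ofAdd i = 1 := (map_eq_one_iff φ φ.injective).1 (Subtype.ext h)
      rw [ofAdd_eq_one.1 hi, r_zero]
    · refine absurd ?_ htC
      rw [eq_inv_of_mul_eq_one_left h]
      exact inv_mem (φ (ofAdd i)).2
  · intro g
    by_cases hg : g ∈ C
    · exact ⟨r (φ.symm ⟨g, hg⟩).toAdd, by simp [dihedralLift]⟩
    · refine ⟨sr (φ.symm ⟨t * g, hmul g hg⟩).toAdd, ?_⟩
      simp [dihedralLift, ← mul_assoc, ← sq, ht]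

theorem IsRotationSubgroup.nonempty_mulEquiv_dihedralGroup {C : Subgroup G}
    (hC : IsRotationSubgroup C) (hcard : ¬ Nat.card C ∣ 2) :
    Nonempty (G ≃* DihedralGroup (Nat.card C)) := by
  obtain ⟨t, ht⟩ : ∃ t, t ∉ C := by simpa [Subgroup.eq_top_iff'] using hC.ne_top
  have := hC.isCyclic
  obtain ⟨a, ha⟩ := IsCyclic.exists_ofOrder_eq_natCard (α := C)
  have ha2 : (a : G) ^ 2 ≠ 1 := fun h =>
    hcard (ha ▸ orderOf_dvd_of_pow_eq_one (Subtype.ext h))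
  exact ⟨(MulEquiv.ofBijective _ (dihedralLift_bijective (zmodCyclicMulEquiv hC.isCyclic) ht
    (hC.sq_eq_one t ht) (fun i => conj_eq_inv_of_notMem hC.sq_eq_one ht (Subtype.prop _))
    (fun g hg => mul_mem_of_notMem_of_notMem hC.sq_eq_one a.2 ha2 ht hg))).symm⟩

theorem isRotationSubgroup_zpowers_r_one :
    IsRotationSubgroup (Subgroup.zpowers (r 1 : DihedralGroup n)) := by
  have r_mem (i : ZMod n) : r i ∈ Subgroup.zpowers (r 1 : DihedralGroup n) :=
    ⟨i.cast, by simp⟩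
  refine ⟨inferInstance, fun h => ?_, ?_⟩
  · obtain ⟨k, hk⟩ := Subgroup.mem_zpowers_iff.1 (h ▸ Subgroup.mem_top (sr 0 : DihedralGroup n))
    simp at hk
  · rintro (i | i) hi
    · exact absurd (r_mem i) hi
    · rw [sq, sr_mul_self]

theorem IsRotationSubgroup.map_mulEquiv {H : Type*} [Group H] {C : Subgroup H}
    (hC : IsRotationSubgroup C) (e : H ≃* G) : IsRotationSubgroup (C.map e.toMonoidHom) where
  isCyclic := (C.equivMapOfInjective _ e.injective).isCyclic.1 hC.isCyclic
  ne_top h := hC.ne_top <| Subgroup.map_injective e.injective <| by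
    rw [h, Subgroup.map_top_of_surjective _ e.surjective]
  sq_eq_one v hv := by
    have hv' : e.symm v ∉ C := fun h => hv ⟨e.symm v, h, e.apply_symm_apply v⟩
    simpa using congrArg e (hC.sq_eq_one _ hv')

theorem exists_isRotationSubgroup_iff_nonempty_mulEquiv (hn : ¬ n ∣ 2) :
    (∃ C : Subgroup G, IsRotationSubgroup C ∧ Nat.card C = n) ↔
      Nonempty (G ≃* DihedralGroup n) := by
  constructor
  · rintro ⟨C, hC, rfl⟩
    exact hC.nonempty_mulEquiv_dihedralGroup hn
  · rintro ⟨e⟩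
    refine ⟨_, isRotationSubgroup_zpowers_r_one.map_mulEquiv e.symm, ?_⟩
    rw [Subgroup.card_map_of_injective e.symm.injective, Nat.card_zpowers, orderOf_r_one]

end Dihedral

section CyclicPair

variable {G : Type*} [Group G] {v w x y : G}

/-- `x` and `y` together generate a cyclic subgroup; for distinct vertices this is adjacency in the
complement graph `Γ̄_G`. -/
def CyclicPair (x y : G) : Prop :=
  IsCyclic (Subgroup.closure ({x, y} : Set G))

theorem cyclicPair_iff_exists_mem_zpowers :
    CyclicPair x y ↔ ∃ g, x ∈ Subgroup.zpowers g ∧ y ∈ Subgroup.zpowers g := by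
  constructor
  · intro h
    obtain ⟨g, hg⟩ := (Subgroup.isCyclic_iff_exists_zpowers_eq_top _).1 h
    exact ⟨g, by simp [hg, Subgroup.mem_closure_of_mem], by simp [hg, Subgroup.mem_closure_of_mem]⟩
  · rintro ⟨g, hx, hy⟩
    exact Subgroup.isCyclic_of_le
      ((Subgroup.closure_le _).2 (Set.insert_subset hx (Set.singleton_subset_iff.2 hy)))

theorem CyclicPair.symm (h : CyclicPair x y) : CyclicPair y x := by
  rwa [CyclicPair, Set.pair_comm]

instance : Std.Symm (CyclicPair (G := G)) :=
  ⟨fun _ _ => CyclicPair.symm⟩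

theorem cyclicPair_of_mem_zpowers (h : y ∈ Subgroup.zpowers x) : CyclicPair x y :=
  cyclicPair_iff_exists_mem_zpowers.2 ⟨x, Subgroup.mem_zpowers x, h⟩

theorem CyclicPair.self_mul (h : CyclicPair x y) : CyclicPair x (x * y) := by
  obtain ⟨g, hx, hy⟩ := cyclicPair_iff_exists_mem_zpowers.1 h
  exact cyclicPair_iff_exists_mem_zpowers.2 ⟨g, hx, mul_mem hx hy⟩

theorem CyclicPair.eq_one_or_eq_of_notMem {C : Subgroup G} (hC : ∀ v ∉ C, v ^ 2 = 1)
    (hv : v ∉ C) (h : CyclicPair v w) : w = 1 ∨ w = v := by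
  obtain ⟨g, hvg, hwg⟩ := cyclicPair_iff_exists_mem_zpowers.1 h
  have hg : g ^ 2 = 1 := hC g fun hg => hv (Subgroup.zpowers_le.2 hg hvg)
  have hv1 : v ≠ 1 := fun hv1 => hv (hv1 ▸ one_mem C)
  have hvg : v = g := (eq_one_or_eq_of_mem_zpowers hg hvg).resolve_left hv1
  exact hvg ▸ eq_one_or_eq_of_mem_zpowers hg hwg

theorem isCyclic_of_forall_mem_cyclicPair {C : Subgroup G} [Finite C]
    (h : ∀ x ∈ C, ∀ y ∈ C, CyclicPair x y) : IsCyclic C := by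
  obtain ⟨g, hg, hmax⟩ := (C : Set G).exists_max_image orderOf (Set.toFinite _) ⟨1, one_mem C⟩
  refine (Subgroup.isCyclic_iff_exists_zpowers_eq_top C).2
    ⟨g, (Subgroup.zpowers_le.2 hg).antisymm fun x hx => ?_⟩
  obtain ⟨k, hk⟩ := (Subgroup.isCyclic_iff_exists_zpowers_eq_top _).1 (h g hg x hx)
  have hkC : Subgroup.zpowers k ≤ C := by
    rw [hk, Subgroup.closure_le]
    exact Set.insert_subset hg (Set.singleton_subset_iff.2 hx)
  have : Finite (Subgroup.zpowers k) := Finite.of_injective _ (Subgroup.inclusion_injective hkC)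
  have hgk : Subgroup.zpowers g = Subgroup.zpowers k := by
    refine Subgroup.eq_of_le_of_card_ge ?_ ?_
    · rw [Subgroup.zpowers_le, hk]
      exact Subgroup.mem_closure_of_mem (by simp)
    · rw [Nat.card_zpowers, Nat.card_zpowers]
      exact hmax k (hkC (Subgroup.mem_zpowers k))
  rw [hgk, hk]
  exact Subgroup.mem_closure_of_mem (by simp)

variable (G) in
/-- The cyclicizer as a subgroup, giving access to the closure properties of `cyclicizer G`. -/
def cyclicizerSubgroup : Subgroup G where
  carrier := cyclicizer G
  one_mem' x := cyclicPair_of_mem_zpowers (one_mem _)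
  mul_mem' {y z} hy hz x := by
    obtain ⟨g, hxg, hyg⟩ := cyclicPair_iff_exists_mem_zpowers.1 (hy x)
    obtain ⟨k, hgk, hzk⟩ := cyclicPair_iff_exists_mem_zpowers.1 (hz g)
    have hle : Subgroup.zpowers g ≤ Subgroup.zpowers k := Subgroup.zpowers_le.2 hgk
    exact cyclicPair_iff_exists_mem_zpowers.2 ⟨k, hle hxg, mul_mem (hle hyg) hzk⟩
  inv_mem' {y} hy x := by
    obtain ⟨g, hxg, hyg⟩ := cyclicPair_iff_exists_mem_zpowers.1 (hy x)
    exact cyclicPair_iff_exists_mem_zpowers.2 ⟨g, hxg, inv_mem hyg⟩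

end CyclicPair

/-- The complement graph `Γ̄_G` is the union of the complete graph on `S` and isolated vertices. -/
structure IsSoleClique {G : Type*} [Group G] (S : Set G) : Prop where
  notMem_cyclicizer : ∀ x ∈ S, x ∉ cyclicizer G
  pairwise : S.Pairwise CyclicPair
  isolated : ∀ v ∉ S, v ∉ cyclicizer G → ∀ w ∉ cyclicizer G, w ≠ v → ¬ CyclicPair v w

namespace IsSoleClique

variable {G : Type*} [Group G] {S : Set G} {k v x y : G}

theorem exists_notMem (h : IsSoleClique S) (hS : S.Nonempty) : ∃ t ∉ S, t ∉ cyclicizer G := by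
  by_contra! hall
  obtain ⟨a, ha⟩ := hS
  refine h.notMem_cyclicizer a ha fun x => ?_
  by_cases hx : x ∈ S
  · obtain rfl | hxa := eq_or_ne x a
    · exact cyclicPair_of_mem_zpowers (Subgroup.mem_zpowers x)
    · exact h.pairwise hx ha hxa
  · exact CyclicPair.symm (hall x hx a)

theorem mem_cyclicizer_iff (h : IsSoleClique S) (hS : S.Nonempty) : k ∈ cyclicizer G ↔ k = 1 := by
  refine ⟨fun hk => ?_, fun hk => hk ▸ one_mem (cyclicizerSubgroup G)⟩
  obtain ⟨t, htS, ht⟩ := h.exists_notMem hS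
  by_contra hk1
  have htk : t * k ∉ cyclicizer G := fun htk =>
    ht (((cyclicizerSubgroup G).mul_mem_cancel_right hk).1 htk)
  exact h.isolated t htS ht (t * k) htk (by simpa using hk1) (CyclicPair.self_mul (hk t))

theorem mem_insert_one_of_cyclicPair (h : IsSoleClique S) (hx : x ∈ S) (hxy : CyclicPair x y) :
    y ∈ insert 1 S := by
  have hS : S.Nonempty := ⟨x, hx⟩
  by_contra hy
  obtain ⟨hy1, hyS⟩ : y ≠ 1 ∧ y ∉ S := by simpa using hy
  exact h.isolated y hyS (mt (h.mem_cyclicizer_iff hS).1 hy1) x (h.notMem_cyclicizer x hx)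
    (ne_of_mem_of_not_mem hx hyS) hxy.symm

theorem cyclicPair_of_mem_insert_one (h : IsSoleClique S) (hx : x ∈ insert 1 S)
    (hy : y ∈ insert 1 S) : CyclicPair x y := by
  obtain rfl | hxy := eq_or_ne x y
  · exact cyclicPair_of_mem_zpowers (Subgroup.mem_zpowers x)
  · exact h.pairwise.insert_of_symm
      (fun z _ _ => (cyclicPair_of_mem_zpowers (one_mem _)).symm) hx hy hxy

/-- The subgroup consisting of the clique and the identity; it turns out to be the rotation subgroup
of a dihedral group. -/
def subgroup (h : IsSoleClique S) : Subgroup G where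
  carrier := insert 1 S
  one_mem' := Set.mem_insert 1 S
  mul_mem' {x y} hx hy := by
    obtain rfl | hxS := hx
    · rwa [one_mul]
    · exact h.mem_insert_one_of_cyclicPair hxS
        (h.cyclicPair_of_mem_insert_one (Or.inr hxS) hy).self_mul
  inv_mem' {x} hx := by
    obtain rfl | hxS := hx
    · exact Or.inl inv_one
    · exact h.mem_insert_one_of_cyclicPair hxS
        (cyclicPair_of_mem_zpowers (inv_mem (Subgroup.mem_zpowers x)))

theorem isRotationSubgroup_subgroup [Finite S] (h : IsSoleClique S) (hS : S.Nonempty) :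
    IsRotationSubgroup h.subgroup where
  isCyclic :=
    have : Finite h.subgroup := inferInstanceAs (Finite (insert 1 S : Set G))
    isCyclic_of_forall_mem_cyclicPair fun _ hx _ hy => h.cyclicPair_of_mem_insert_one hx hy
  ne_top htop := by
    obtain ⟨t, htS, ht⟩ := h.exists_notMem hS
    have htC : t ∈ h.subgroup := htop ▸ Subgroup.mem_top t
    exact ht ((h.mem_cyclicizer_iff hS).2 (htC.resolve_right htS))
  sq_eq_one v hv := by
    obtain ⟨hv1, hvS⟩ : v ≠ 1 ∧ v ∉ S := by simpa [subgroup, ← SetLike.mem_coe] using hv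
    by_contra hv2
    refine h.isolated v hvS (mt (h.mem_cyclicizer_iff hS).1 hv1) v⁻¹
      (mt (h.mem_cyclicizer_iff hS).1 (inv_ne_one.2 hv1)) ?_
      (cyclicPair_of_mem_zpowers (inv_mem (Subgroup.mem_zpowers v)))
    rwa [ne_eq, inv_eq_iff_mul_eq_one, ← sq]

theorem card_subgroup [Finite S] (h : IsSoleClique S) :
    Nat.card h.subgroup = S.ncard + 1 := by
  have h1 : (1 : G) ∉ S := fun h1 =>
    h.notMem_cyclicizer 1 h1 ((h.mem_cyclicizer_iff ⟨1, h1⟩).2 rfl)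
  exact Set.ncard_insert_of_notMem h1

end IsSoleClique

section Characterization

variable {G : Type*} [Group G]

theorem IsRotationSubgroup.isSoleClique {C : Subgroup G} (hC : IsRotationSubgroup C)
    (hbot : C ≠ ⊥) : IsSoleClique ((C : Set G) \ {1}) := by
  obtain ⟨g, rfl⟩ := (Subgroup.isCyclic_iff_exists_zpowers_eq_top C).1 hC.isCyclic
  obtain ⟨t, ht⟩ : ∃ t, t ∉ Subgroup.zpowers g := by
    simpa [Subgroup.eq_top_iff'] using hC.ne_top
  have eq_one_or_eq {v w} := CyclicPair.eq_one_or_eq_of_notMem (v := v) (w := w) hC.sq_eq_one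
  refine ⟨fun x ⟨hxC, hx1⟩ hx => ?_, fun x hx y hy _ => ?_, fun v hv hv' w hw hwv hvw => ?_⟩
  · obtain hx1' | rfl := eq_one_or_eq ht (hx t)
    · exact hx1 hx1'
    · exact ht hxC
  · exact cyclicPair_iff_exists_mem_zpowers.2 ⟨g, hx.1, hy.1⟩
  · have one_mem_cyclicizer : 1 ∈ cyclicizer G := one_mem (cyclicizerSubgroup G)
    have hvC : v ∉ Subgroup.zpowers g := fun hvC =>
      hv ⟨hvC, fun hv1 => hv' (hv1 ▸ one_mem_cyclicizer)⟩
    obtain rfl | rfl := eq_one_or_eq hvC hvw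
    · exact hw one_mem_cyclicizer
    · exact hwv rfl

theorem exists_isSoleClique_iff_exists_isRotationSubgroup {m : ℕ} (hm : m ≠ 0) :
    (∃ S : Set G, S.ncard = m ∧ IsSoleClique S) ↔
      ∃ C : Subgroup G, IsRotationSubgroup C ∧ Nat.card C = m + 1 := by
  constructor
  · rintro ⟨S, rfl, h⟩
    have : Finite S := Set.finite_of_ncard_ne_zero hm
    have hS : S.Nonempty := Set.nonempty_of_ncard_ne_zero hm
    exact ⟨h.subgroup, h.isRotationSubgroup_subgroup hS, h.card_subgroup⟩
  · rintro ⟨C, hC, hcard⟩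
    have hbot : C ≠ ⊥ := by
      rintro rfl
      exact hm (by simpa using hcard.symm)
    refine ⟨_, ?_, hC.isSoleClique hbot⟩
    rw [Set.ncard_sdiff_singleton_of_mem (one_mem C)]
    exact Nat.sub_eq_of_eq_add hcard

theorem set_ncard_eq_four {α : Type*} {s : Set α} :
    s.ncard = 4 ↔ ∃ a b c d, a ≠ b ∧ a ≠ c ∧ a ≠ d ∧ b ≠ c ∧ b ≠ d ∧ c ≠ d ∧ s = {a, b, c, d} := by
  constructor
  · intro h
    obtain ⟨a, t, ha, rfl, ht⟩ := Set.eq_insert_of_ncard_eq_succ h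
    obtain ⟨b, c, d, hbc, hbd, hcd, rfl⟩ := Set.ncard_eq_three.1 ht
    obtain ⟨hab, hac, had⟩ : a ≠ b ∧ a ≠ c ∧ a ≠ d := by simpa using ha
    exact ⟨a, b, c, d, hab, hac, had, hbc, hbd, hcd, rfl⟩
  · rintro ⟨a, b, c, d, hab, hac, had, hbc, hbd, hcd, rfl⟩
    have h3 : ({b, c, d} : Set α).ncard = 3 := Set.ncard_eq_three.2 ⟨b, c, d, hbc, hbd, hcd, rfl⟩
    rw [Set.ncard_insert_of_notMem (by simp [hab, hac, had]), h3]

theorem exists_isSoleClique_ncard_four_iff :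
    (∃ S : Set G, S.ncard = 4 ∧ IsSoleClique S) ↔
      ∃ a b c d : G, a ∉ cyclicizer G ∧ b ∉ cyclicizer G ∧ c ∉ cyclicizer G ∧ d ∉ cyclicizer G ∧
        a ≠ b ∧ a ≠ c ∧ a ≠ d ∧ b ≠ c ∧ b ≠ d ∧ c ≠ d ∧
        CyclicPair a b ∧ CyclicPair a c ∧ CyclicPair a d ∧
        CyclicPair b c ∧ CyclicPair b d ∧ CyclicPair c d ∧
        ∀ v, v ∉ cyclicizer G → v ≠ a → v ≠ b → v ≠ c → v ≠ d →
          ∀ w, w ∉ cyclicizer G → w ≠ v → ¬ CyclicPair v w := by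
  constructor
  · rintro ⟨S, hS, h⟩
    obtain ⟨a, b, c, d, hab, hac, had, hbc, hbd, hcd, rfl⟩ := set_ncard_eq_four.1 hS
    have hadj {x y} := h.pairwise (x := x) (y := y)
    exact ⟨a, b, c, d, h.notMem_cyclicizer a (by simp), h.notMem_cyclicizer b (by simp),
      h.notMem_cyclicizer c (by simp), h.notMem_cyclicizer d (by simp),
      hab, hac, had, hbc, hbd, hcd,
      hadj (by simp) (by simp) hab, hadj (by simp) (by simp) hac, hadj (by simp) (by simp) had,
      hadj (by simp) (by simp) hbc, hadj (by simp) (by simp) hbd, hadj (by simp) (by simp) hcd,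
      fun v hv hva hvb hvc hvd => h.isolated v (by simp [hva, hvb, hvc, hvd]) hv⟩
  · rintro ⟨a, b, c, d, ha, hb, hc, hd, hab, hac, had, hbc, hbd, hcd,
      kab, kac, kad, kbc, kbd, kcd, hiso⟩
    refine ⟨{a, b, c, d}, set_ncard_eq_four.2 ⟨a, b, c, d, hab, hac, had, hbc, hbd, hcd, rfl⟩,
      ⟨by simp [ha, hb, hc, hd], ?_, fun v hvS hv => ?_⟩⟩
    · simp [Set.pairwise_insert_of_symm, kab, kac, kad, kbc, kbd, kcd]
    · simp only [Set.mem_insert_iff, Set.mem_singleton_iff, not_or] at hvS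
      exact hiso v hv hvS.1 hvS.2.1 hvS.2.2.1 hvS.2.2.2

theorem compl_eq_K4_union_isolated_iff_D10_general {m : ℕ} (hm : 2 ≤ m) :
    (∃ S : Set G, S.ncard = m ∧ IsSoleClique S) ↔ Nonempty (G ≃* DihedralGroup (m + 1)) :=
  (exists_isSoleClique_iff_exists_isRotationSubgroup (by lia)).trans <|
    exists_isRotationSubgroup_iff_nonempty_mulEquiv <| Nat.not_dvd_of_pos_of_lt two_pos (by lia)

end Characterization

theorem compl_eq_K4_union_isolated_iff_D10 (G : Type*) [Group G] [Finite G]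
    (hG : ¬ IsCyclic G) (n : ℕ) (hn : n = Nat.card G)
    (hc : Nat.card (cyclicizer G) = 1) :
    (∃ a b c d : G, a ∉ cyclicizer G ∧ b ∉ cyclicizer G ∧ c ∉ cyclicizer G ∧
        d ∉ cyclicizer G ∧
        a ≠ b ∧ a ≠ c ∧ a ≠ d ∧ b ≠ c ∧ b ≠ d ∧ c ≠ d ∧
        IsCyclic (Subgroup.closure ({a, b} : Set G)) ∧
        IsCyclic (Subgroup.closure ({a, c} : Set G)) ∧
        IsCyclic (Subgroup.closure ({a, d} : Set G)) ∧
        IsCyclic (Subgroup.closure ({b, c} : Set G)) ∧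
        IsCyclic (Subgroup.closure ({b, d} : Set G)) ∧
        IsCyclic (Subgroup.closure ({c, d} : Set G)) ∧
        ∀ v : G, v ∉ cyclicizer G → v ≠ a → v ≠ b → v ≠ c → v ≠ d →
          ∀ w : G, w ∉ cyclicizer G → w ≠ v →
            ¬ IsCyclic (Subgroup.closure ({v, w} : Set G))) ↔
      (n = 10 ∧ Nonempty (G ≃* DihedralGroup 5)) := by
  have card_eq : Nonempty (G ≃* DihedralGroup 5) → n = 10 := fun ⟨e⟩ => by
    rw [hn, Nat.card_congr e.toEquiv, DihedralGroup.nat_card]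
  rw [and_iff_right_of_imp card_eq, ← compl_eq_K4_union_isolated_iff_D10_general (m := 4) (by lia)]
  exact exists_isSoleClique_ncard_four_iff.symm
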